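/- Let K be a field of characteristic different from 2, let ℓ ≥ 1, let E be a finite étale commutative K-algebra of K-dimension 2ℓ + 1, and let σ be a K-linear algebra involution of E with dim_K E^σ = ℓ + 1. Let V be a (2ℓ+1)-dimensional K-vector space and let f be a nondegenerate symmetric K-bilinear form on V that admits a totally isotropic subspace of dimension ℓ (i.e. f has Witt index ℓ). Then there exists an injective K-algebra homomorphism ι : E → End_K(V) such that f(ι(a)x, y) = f(x, ι(σ(a))y) for all a ∈ E and x, y ∈ V. -/

import Mathlib

/-!
If `s` is a `σ`-invariant linear functional on `E` for which `(x, y) ↦ s (x * y)` is nondegenerate,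
then multiplication by `a` on `E` has adjoint multiplication by `σ a` for the symmetric form
`s (x * σ y)`. Suppose that form has Witt index `ℓ`. Both it and `f` are then the orthogonal sum of
a hyperbolic space of dimension `2 * ℓ` and a line, so they are similar: hyperbolic spaces have
similitudes of every factor, which makes it harmless to rescale the line. A similitude carries the
multiplication action of `E` over to `V`.

It remains to find `s`. Over a finite field the trace works, since by Chevalley–Warning every
nondegenerate symmetric form in `2 * ℓ + 1` variables has Witt index `ℓ`. Over an infinite field the
dimension of `E^σ` forces `E` to be generated by some `α` with `σ α = -α`, and `s` reads off the
coefficient of `α ^ (2 * ℓ)`: the powers `1, α, …, α ^ (ℓ - 1)` span a totally isotropic subspace.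
-/

open Module Polynomial TensorProduct

section Isotropic

variable {K V : Type*} [Field K] [AddCommGroup V] [Module K V]
  {B : LinearMap.BilinForm K V} {W : Submodule K V}

/-- A subspace on which the bilinear form `B` vanishes identically. -/
def IsTotallyIsotropic (B : LinearMap.BilinForm K V) (W : Submodule K V) : Prop :=
  ∀ w ∈ W, ∀ w' ∈ W, B w w' = 0

theorem isTotallyIsotropic_span {S : Set V} (hS : ∀ x ∈ S, ∀ y ∈ S, B x y = 0) :
    IsTotallyIsotropic B (Submodule.span K S) := by
  intro x hx y hy
  induction hx, hy using Submodule.span_induction₂ with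
  | mem_mem x y hx hy => exact hS x hx y hy
  | zero_left => simp
  | zero_right => simp
  | add_left _ _ _ _ _ _ h₁ h₂ => simp [h₁, h₂]
  | add_right _ _ _ _ _ _ h₁ h₂ => simp [h₁, h₂]
  | smul_left _ _ _ _ _ h => simp [h]
  | smul_right _ _ _ _ _ h => simp [h]

namespace IsTotallyIsotropic

theorem le_orthogonal (hW : IsTotallyIsotropic B W) : W ≤ B.orthogonal W :=
  fun x hx y hy ↦ hW y hy x hx

theorem sup_span_singleton (hW : IsTotallyIsotropic B W) (hB : B.IsSymm) {v : V}
    (hv : v ∈ B.orthogonal W) (hvv : B v v = 0) : IsTotallyIsotropic B (W ⊔ K ∙ v) := by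
  have hWv : ∀ w ∈ W, B w v = 0 := hv
  intro x hx y hy
  obtain ⟨w, hw, _, hav, rfl⟩ := Submodule.mem_sup.1 hx
  obtain ⟨a, rfl⟩ := Submodule.mem_span_singleton.1 hav
  obtain ⟨w', hw', _, hav', rfl⟩ := Submodule.mem_sup.1 hy
  obtain ⟨a', rfl⟩ := Submodule.mem_span_singleton.1 hav'
  simp [hW w hw w' hw', hWv w hw, hB.eq v w', hWv w' hw', hvv]

theorem two_mul_finrank_le [FiniteDimensional K V] (hW : IsTotallyIsotropic B W)
    (hB : B.Nondegenerate) : 2 * finrank K W ≤ finrank K V := by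
  have hle := Submodule.finrank_mono hW.le_orthogonal
  have hWV := W.finrank_le
  rw [LinearMap.BilinForm.finrank_orthogonal hB] at hle
  lia

theorem apply_self_ne_zero [FiniteDimensional K V] (hW : IsTotallyIsotropic B W)
    (hB : B.IsSymm) (hnd : B.Nondegenerate) (hfin : finrank K V ≤ 2 * finrank K W + 1)
    {v : V} (hv : v ∈ B.orthogonal W) (hvW : v ∉ W) : B v v ≠ 0 := by
  intro hvv
  have hle := (hW.sup_span_singleton hB hv hvv).two_mul_finrank_le hnd
  rw [Submodule.finrank_sup_span_singleton hvW] at hle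
  lia

end IsTotallyIsotropic

theorem exists_dual_section_of_nondegenerate [FiniteDimensional K V] (hB : B.Nondegenerate)
    (W : Submodule K V) :
    ∃ g : Dual K W →ₗ[K] V, ∀ (φ : Dual K W) (w : W), B (g φ) w = φ w := by
  obtain ⟨g, hg⟩ := LinearMap.exists_rightInverse_of_surjective
    (W.dualRestrict ∘ₗ (B.toDual hB).toLinearMap)
    (LinearMap.range_eq_top.2 (Subspace.dualRestrict_surjective.comp (B.toDual hB).surjective))
  exact ⟨g, fun φ w ↦ DFunLike.congr_fun (DFunLike.congr_fun hg φ) w⟩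

namespace IsTotallyIsotropic

theorem exists_isotropic_dual_section [NeZero (2 : K)] [FiniteDimensional K W]
    (hW : IsTotallyIsotropic B W) (hB : B.IsSymm) {g : Dual K W →ₗ[K] V}
    (hg : ∀ (φ : Dual K W) (w : W), B (g φ) w = φ w) :
    ∃ g' : Dual K W →ₗ[K] V, (∀ (φ : Dual K W) (w : W), B (g' φ) w = φ w) ∧
      ∀ φ ψ, B (g' φ) (g' ψ) = 0 := by
  -- `r φ ∈ W` represents `B (g φ) (g ·)`; half of it is the error of `g φ`.
  let r : Dual K W →ₗ[K] W := (evalEquiv K W).symm.toLinearMap ∘ₗ B.compl₁₂ g g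
  have hr : ∀ φ ψ : Dual K W, B (g ψ) (r φ) = B (g φ) (g ψ) := fun φ ψ ↦ by
    rw [hg]
    exact apply_evalEquiv_symm_apply K W ψ _
  have hWW : ∀ w w' : W, B w w' = 0 := fun w w' ↦ hW w w.2 w' w'.2
  refine ⟨g - (2 : K)⁻¹ • W.subtype ∘ₗ r, fun φ w ↦ ?_, fun φ ψ ↦ ?_⟩
  · simp [hg, hWW]
  · have h2 : (2 : K) ≠ 0 := NeZero.ne 2
    simp only [LinearMap.sub_apply, LinearMap.smul_apply, LinearMap.comp_apply,
      Submodule.subtype_apply, map_sub, map_smul, hr, hB.eq (r φ : V) (g ψ), hWW, smul_eq_mul,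
      hB.eq (g ψ) (g φ)]
    field_simp
    ring

theorem exists_dualProd_isometry [NeZero (2 : K)] [FiniteDimensional K V]
    (hW : IsTotallyIsotropic B W) (hB : B.IsSymm) (hnd : B.Nondegenerate) :
    ∃ h : LinearMap.dualProd K W →bᵢ B, ∀ w : W, h (0, w) = w := by
  obtain ⟨g₀, hg₀⟩ := exists_dual_section_of_nondegenerate hnd W
  obtain ⟨g, hgW, hgg⟩ := hW.exists_isotropic_dual_section hB hg₀
  have hWW : ∀ w w' : W, B w w' = 0 := fun w w' ↦ hW w w.2 w' w'.2
  have hWg : ∀ (w : W) φ, B w (g φ) = φ w := fun w φ ↦ by rw [hB.eq, hgW]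
  exact ⟨⟨g.coprod W.subtype, fun z z' ↦ by
    simp [hgW, hgg, hWW, hWg, add_comm]⟩, fun w ↦ by
    simp [← LinearMap.BilinForm.Isometry.coe_toLinearMap]⟩

theorem exists_dualProd_isometry_orthogonal [NeZero (2 : K)] [FiniteDimensional K V]
    (hW : IsTotallyIsotropic B W) (hB : B.IsSymm) (hnd : B.Nondegenerate)
    (hfin : finrank K V = 2 * finrank K W + 1) :
    ∃ (h : LinearMap.dualProd K W →bᵢ B) (u : V), B u u ≠ 0 ∧ ∀ z, B (h z) u = 0 := by
  obtain ⟨h, hhW⟩ := hW.exists_dualProd_isometry hB hnd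
  let H := LinearMap.range h.toLinearMap
  have hH : finrank K H < finrank K V := by
    have hle : finrank K H ≤ finrank K (Dual K W × W) := LinearMap.finrank_range_le _
    rw [finrank_prod, Subspace.dual_finrank_eq] at hle
    lia
  obtain ⟨u, hu, hu0⟩ : ∃ u ∈ B.orthogonal H, u ≠ 0 := by
    refine Submodule.exists_mem_ne_zero_of_ne_bot fun hbot ↦ ?_
    have := LinearMap.BilinForm.finrank_orthogonal hnd H
    rw [hbot, finrank_bot] at this
    lia
  have hhu : ∀ z, B (h z) u = 0 := fun z ↦ hu _ ⟨z, rfl⟩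
  have huW : u ∈ B.orthogonal W := fun w hw ↦ by
    simpa [hhW] using hhu (0, ⟨w, hw⟩)
  have hu_notMem : u ∉ W := by
    intro hmem
    have hφ (φ : Dual K W) : φ ⟨u, hmem⟩ = 0 := by
      simpa [hhW, hhu] using (h.map_app (φ, 0) (0, ⟨u, hmem⟩)).symm
    exact hu0 (congrArg Subtype.val ((forall_dual_apply_eq_zero_iff K (⟨u, hmem⟩ : W)).1 hφ))
  exact ⟨h, u, hW.apply_self_ne_zero hB hnd hfin.le huW hu_notMem, hhu⟩

theorem exists_equiv_dualProd_prod [NeZero (2 : K)] [FiniteDimensional K V]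
    (hW : IsTotallyIsotropic B W) (hB : B.IsSymm) (hnd : B.Nondegenerate)
    (hfin : finrank K V = 2 * finrank K W + 1) :
    ∃ d : K, d ≠ 0 ∧ ∃ e : ((Dual K W × W) × K) ≃ₗ[K] V, ∀ x y,
      B (e x) (e y) = LinearMap.dualProd K W x.1 y.1 + d * (x.2 * y.2) := by
  obtain ⟨h, u, hu, hhu⟩ := hW.exists_dualProd_isometry_orthogonal hB hnd hfin
  let e := h.toLinearMap.coprod (LinearMap.toSpanSingleton K V u)
  have he : ∀ x y, B (e x) (e y) = LinearMap.dualProd K W x.1 y.1 + B u u * (x.2 * y.2) := by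
    intro x y
    simp only [e, LinearMap.coprod_apply, LinearMap.BilinForm.Isometry.coe_toLinearMap,
      LinearMap.toSpanSingleton_apply, map_add, map_smul, LinearMap.add_apply,
      LinearMap.smul_apply, h.map_app, hhu, hB.eq u (h y.1), smul_eq_mul]
    ring
  have he_inj : Function.Injective e := by
    refine (injective_iff_map_eq_zero e).2 fun x hx ↦ ?_
    have hx_orth (y : (Dual K W × W) × K) :
        LinearMap.dualProd K W x.1 y.1 + B u u * (x.2 * y.2) = 0 := by
      rw [← he, hx, map_zero, LinearMap.zero_apply]
    have hsep := (LinearMap.separatingLeft_dualProd K W).2 (eval_apply_injective K)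
    refine Prod.ext (hsep x.1 fun z ↦ ?_) ?_
    · simpa using hx_orth (z, 0)
    · simpa [hu] using hx_orth (0, 1)
  have hdim : finrank K ((Dual K W × W) × K) = finrank K V := by
    simp only [finrank_prod, Subspace.dual_finrank_eq, finrank_self, hfin]
    ring
  exact ⟨B u u, hu, LinearMap.linearEquivOfInjective e he_inj hdim, he⟩

theorem exists_similitude [NeZero (2 : K)] [FiniteDimensional K V]
    {V' : Type*} [AddCommGroup V'] [Module K V'] [FiniteDimensional K V']
    {B' : LinearMap.BilinForm K V'} {W' : Submodule K V'}
    (hW : IsTotallyIsotropic B W) (hB : B.IsSymm) (hnd : B.Nondegenerate)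
    (hfin : finrank K V = 2 * finrank K W + 1)
    (hW' : IsTotallyIsotropic B' W') (hB' : B'.IsSymm) (hnd' : B'.Nondegenerate)
    (hfin' : finrank K V' = 2 * finrank K W' + 1) (hWW' : finrank K W = finrank K W') :
    ∃ c : K, c ≠ 0 ∧ ∃ e : V ≃ₗ[K] V', ∀ x y, B' (e x) (e y) = c * B x y := by
  obtain ⟨d, hd, e, he⟩ := hW.exists_equiv_dualProd_prod hB hnd hfin
  obtain ⟨d', hd', e', he'⟩ := hW'.exists_equiv_dualProd_prod hB' hnd' hfin'
  let q : W ≃ₗ[K] W' := LinearEquiv.ofFinrankEq W W' hWW'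
  have hc : d' / d ≠ 0 := div_ne_zero hd' hd
  -- The hyperbolic part admits similitudes of every factor, so the line alone dictates the factor.
  let m : ((Dual K W × W) × K) ≃ₗ[K] ((Dual K W' × W') × K) :=
    ((q.symm.dualMap ≪≫ₗ LinearEquiv.smulOfNeZero K _ (d' / d) hc).prodCongr q).prodCongr
      (LinearEquiv.refl K K)
  have hm : ∀ x y, B' (e' (m x)) (e' (m y)) = d' / d * B (e x) (e y) := by
    intro x y
    rw [he, he']
    simp only [m, LinearEquiv.prodCongr_apply, LinearEquiv.trans_apply,
      LinearEquiv.smulOfNeZero_apply, LinearEquiv.refl_apply, LinearMap.dualProd_apply_apply,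
      LinearMap.smul_apply, LinearEquiv.dualMap_apply, LinearEquiv.symm_apply_apply, smul_eq_mul]
    field_simp
  refine ⟨d' / d, hc, e.symm ≪≫ₗ m ≪≫ₗ e', fun x y ↦ ?_⟩
  simpa using hm (e.symm x) (e.symm y)

end IsTotallyIsotropic
end Isotropic

section FiniteField

theorem exists_mvPolynomial_eval_equivFun_eq_apply_self {R M n : Type*} [CommRing R]
    [AddCommGroup M] [Module R M] [Finite n] (b : Basis n R M)
    (B : LinearMap.BilinForm R M) :
    ∃ q : MvPolynomial n R, q.totalDegree ≤ 2 ∧ ∀ x, q.eval (b.equivFun x) = B x x := by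
  classical
  have := Fintype.ofFinite n
  refine ⟨∑ i, .X i * B.toMvPolynomial b b.dualBasis i,
    MvPolynomial.totalDegree_finsetSum_le fun i _ ↦ ?_, fun x ↦ ?_⟩
  · refine (MvPolynomial.totalDegree_mul _ _).trans (add_le_add (b := 1) (d := 1) ?_ ?_)
    · exact MvPolynomial.isHomogeneous_X R i |>.totalDegree_le
    · exact LinearMap.toMvPolynomial_totalDegree_le ..
  · calc MvPolynomial.eval (b.equivFun x) (∑ i, .X i * B.toMvPolynomial b b.dualBasis i)
        = ∑ i, b.repr x i * B x (b i) := by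
          simp [Basis.equivFun_apply, LinearMap.toMvPolynomial_eval_eq_apply]
      _ = B x (∑ i, b.repr x i • b i) := by simp only [map_sum, map_smul, smul_eq_mul]
      _ = B x x := by rw [b.sum_repr]

variable {K V : Type*} [Field K] [Finite K] [AddCommGroup V] [Module K V] [FiniteDimensional K V]

theorem exists_ne_zero_apply_self_eq_zero (hV : 2 < finrank K V) (B : LinearMap.BilinForm K V) :
    ∃ v ≠ 0, B v v = 0 := by
  classical
  have := Fintype.ofFinite K
  obtain ⟨p, hp⟩ := CharP.exists K
  have : Fact p.Prime := ⟨CharP.char_is_prime K p⟩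
  let b := finBasis K V
  obtain ⟨q, hq, hqB⟩ := exists_mvPolynomial_eval_equivFun_eq_apply_self b B
  have hdvd := char_dvd_card_solutions p (hq.trans_lt (by rwa [Fintype.card_fin]))
  let zero : {x // q.eval x = 0} := ⟨0, by simpa using hqB 0⟩
  have hcard : 1 < Fintype.card {x // q.eval x = 0} :=
    (Fact.out : p.Prime).one_lt.trans_le (Nat.le_of_dvd (Fintype.card_pos_iff.2 ⟨zero⟩) hdvd)
  obtain ⟨⟨x, hx⟩, hx_ne⟩ := Fintype.exists_ne_of_one_lt_card hcard zero
  refine ⟨b.equivFun.symm x, fun hx0 ↦ hx_ne ?_, ?_⟩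
  · exact Subtype.ext (b.equivFun.symm.map_eq_zero_iff.1 hx0)
  · rw [← hqB, b.equivFun.apply_symm_apply, hx]

theorem exists_mem_orthogonal_notMem_apply_self_eq_zero {B : LinearMap.BilinForm K V}
    (hnd : B.Nondegenerate) {W : Submodule K V} (hfin : 2 * finrank K W + 2 < finrank K V) :
    ∃ v ∈ B.orthogonal W, v ∉ W ∧ B v v = 0 := by
  obtain ⟨C, hC⟩ := W.exists_isCompl
  have hD : 2 < finrank K ↑(C ⊓ B.orthogonal W) := by
    have hsup := Submodule.finrank_sup_add_finrank_inf_eq C (B.orthogonal W)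
    have hle := (C ⊔ B.orthogonal W).finrank_le
    have horth := LinearMap.BilinForm.finrank_orthogonal hnd W
    have hCW := Submodule.finrank_add_eq_of_isCompl hC
    lia
  obtain ⟨⟨v, hvC, hvW⟩, hv0, hvv⟩ := exists_ne_zero_apply_self_eq_zero hD (B.restrict _)
  refine ⟨v, hvW, fun hv ↦ hv0 (Subtype.ext ?_), hvv⟩
  exact Submodule.disjoint_def.1 hC.disjoint v hv hvC

theorem exists_isTotallyIsotropic_finrank_eq {B : LinearMap.BilinForm K V} (hB : B.IsSymm)
    (hnd : B.Nondegenerate) {k : ℕ} (hk : 2 * k < finrank K V) :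
    ∃ W, IsTotallyIsotropic B W ∧ finrank K W = k := by
  induction k with
  | zero => exact ⟨⊥, by simp [IsTotallyIsotropic], finrank_bot K V⟩
  | succ k ih =>
    obtain ⟨W, hW, rfl⟩ := ih (by lia)
    obtain ⟨v, hvorth, hvW, hvv⟩ := exists_mem_orthogonal_notMem_apply_self_eq_zero hnd hk
    exact ⟨W ⊔ K ∙ v, hW.sup_span_singleton hB hvorth hvv,
      Submodule.finrank_sup_span_singleton hvW⟩

end FiniteField

section InvolutionForm

variable {K E : Type*} [CommRing K] [CommRing E] [Algebra K E]

/-- The bilinear form `(x, y) ↦ s (x * σ y)` attached to an algebra endomorphism `σ` and a linear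
functional `s`; it is meant for involutions `σ` and `σ`-invariant `s`. -/
def involutionForm (σ : E →ₐ[K] E) (s : E →ₗ[K] K) : LinearMap.BilinForm K E :=
  ((LinearMap.mul K E).compr₂ s).compl₂ σ.toLinearMap

@[simp]
theorem involutionForm_apply (σ : E →ₐ[K] E) (s : E →ₗ[K] K) (x y : E) :
    involutionForm σ s x y = s (x * σ y) :=
  rfl

variable {σ : E →ₐ[K] E} {s : E →ₗ[K] K}

theorem involutionForm_isSymm (hσ : Function.Involutive σ) (hs : ∀ x, s (σ x) = s x) :
    (involutionForm σ s).IsSymm where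
  eq x y := by simp [← hs (x * σ y), hσ y, mul_comm]

theorem involutionForm_nondegenerate (hσ : Function.Involutive σ)
    (hs : ∀ x, (∀ y, s (x * y) = 0) → x = 0) : (involutionForm σ s).Nondegenerate := by
  refine ⟨fun x hx ↦ hs x fun y ↦ by simpa [hσ y] using hx (σ y), fun y hy ↦ hσ.injective ?_⟩
  rw [map_zero]
  exact hs (σ y) fun x ↦ by simpa [mul_comm] using hy x

theorem involutionForm_mul_left (hσ : Function.Involutive σ) (a x y : E) :
    involutionForm σ s (a * x) y = involutionForm σ s x (σ a * y) := by
  simp [hσ a, mul_left_comm, mul_assoc]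

end InvolutionForm

section Transport

variable {K E V : Type*} [Field K] [CommRing E] [Algebra K E] [AddCommGroup V] [Module K V]

theorem exists_injective_algHom_of_similitude {σ : E →ₐ[K] E} (hσ : Function.Involutive σ)
    {s : E →ₗ[K] K} {f : LinearMap.BilinForm K V} {c : K} (e : E ≃ₗ[K] V)
    (he : ∀ x y, f (e x) (e y) = c * involutionForm σ s x y) :
    ∃ ι : E →ₐ[K] End K V, Function.Injective ι ∧
      ∀ (a : E) (x y : V), f (ι a x) y = f x (ι (σ a) y) := by
  refine ⟨(e.conjAlgEquiv K).toAlgHom.comp (Algebra.lmul K E),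
    (e.conjAlgEquiv K).injective.comp Algebra.lmul_injective, fun a x y ↦ ?_⟩
  calc f (e (a * e.symm x)) y
      = f (e (a * e.symm x)) (e (e.symm y)) := by rw [e.apply_symm_apply]
    _ = f (e (e.symm x)) (e (σ a * e.symm y)) := by rw [he, he, involutionForm_mul_left hσ]
    _ = f x (e (σ a * e.symm y)) := by rw [e.apply_symm_apply]

end Transport

section Etale

variable (K E L : Type*) [Field K] [CommRing E] [Algebra K E] [Field L] [Algebra K L]

/-- The `L`-algebra map `a ⊗ x ↦ (φ ↦ a * φ x)`, which splits a finite étale `K`-algebra `E` when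
`L` is separably closed. -/
noncomputable def tensorToPi : L ⊗[K] E →ₐ[L] ((E →ₐ[K] L) → L) :=
  AlgHom.pi (R := L) (Algebra.TensorProduct.liftEquivRight K L E L)

@[simp]
theorem tensorToPi_tmul (a : L) (x : E) (φ : E →ₐ[K] L) :
    tensorToPi K E L (a ⊗ₜ x) φ = a * φ x := by
  simp [tensorToPi]

variable [Algebra.Etale K E] [IsSepClosed L]

theorem tensorToPi_injective : Function.Injective (tensorToPi K E L) := by
  let e := Algebra.FormallyEtale.equivPiOfIsSepClosed L (L ⊗[K] E)
  refine (injective_iff_map_eq_zero _).2 fun z hz ↦ e.injective ?_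
  rw [map_zero]
  ext p
  obtain ⟨φ, hφ⟩ := (Algebra.TensorProduct.liftEquivRight K L E L).surjective
    ((Pi.evalAlgHom L _ p).comp e.toAlgHom)
  exact (DFunLike.congr_fun hφ z).symm.trans (congrFun hz φ)

variable {K E L} in
theorem eq_zero_of_forall_algHom_apply_eq_zero {x : E} (hx : ∀ φ : E →ₐ[K] L, φ x = 0) :
    x = 0 := by
  have h : (1 : L) ⊗ₜ[K] x = 1 ⊗ₜ 0 := tensorToPi_injective K E L (by ext φ; simp [hx])
  exact Algebra.TensorProduct.includeRight_injective (algebraMap K L).injective h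

variable [FiniteDimensional K E]

theorem natCard_algHom_eq_finrank : Nat.card (E →ₐ[K] L) = finrank K E := by
  refine (card_algHom_le_finrank K E L).antisymm ?_
  have := Fintype.ofFinite (E →ₐ[K] L)
  have hle := LinearMap.finrank_le_finrank_of_injective (f := (tensorToPi K E L).toLinearMap)
    (tensorToPi_injective K E L)
  rwa [finrank_baseChange, finrank_fintype_fun_eq_card, ← Nat.card_eq_fintype_card] at hle

theorem tensorToPi_bijective : Function.Bijective (tensorToPi K E L) := by
  have := Fintype.ofFinite (E →ₐ[K] L)
  refine ⟨tensorToPi_injective K E L, (LinearMap.injective_iff_surjective_of_finrank_eq_finrank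
    (f := (tensorToPi K E L).toLinearMap) ?_).1 (tensorToPi_injective K E L)⟩
  rw [finrank_baseChange, finrank_fintype_fun_eq_card, ← Nat.card_eq_fintype_card,
    natCard_algHom_eq_finrank]

theorem algebraMap_trace_eq_sum_algHom [Fintype (E →ₐ[K] L)] (x : E) :
    algebraMap K L (Algebra.trace K E x) = ∑ φ : E →ₐ[K] L, φ x := by
  classical
  let e := AlgEquiv.ofBijective (tensorToPi K E L) (tensorToPi_bijective K E L)
  calc algebraMap K L (Algebra.trace K E x)
      = Algebra.trace L (L ⊗[K] E) (1 ⊗ₜ x) := by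
        rw [Algebra.trace_apply, ← LinearMap.trace_baseChange, Algebra.baseChange_lmul,
          Algebra.trace_apply]
    _ = Algebra.trace L ((E →ₐ[K] L) → L) (e (1 ⊗ₜ x)) :=
        (Algebra.trace_eq_of_algEquiv e _).symm
    _ = ∑ φ : E →ₐ[K] L, φ x := by
        simp [Algebra.trace_eq_matrix_trace (Pi.basisFun L _), Matrix.trace, e,
          Algebra.leftMulMatrix_eq_repr_mul]

end Etale

section Trace

variable {K E : Type*} [Field K] [CommRing E] [Algebra K E]

theorem eq_zero_of_forall_trace_mul_eq_zero [FiniteDimensional K E] [Algebra.Etale K E] {x : E}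
    (hx : ∀ y, Algebra.trace K E (x * y) = 0) : x = 0 := by
  let L := SeparableClosure K
  have := Fintype.ofFinite (E →ₐ[K] L)
  have hsum : ∑ φ : E →ₐ[K] L, φ x • φ.toLinearMap = 0 := by
    ext y
    simpa [algebraMap_trace_eq_sum_algHom] using congrArg (algebraMap K L) (hx y)
  exact eq_zero_of_forall_algHom_apply_eq_zero (L := L) <|
    Fintype.linearIndependent_iff.1 (linearIndependent_algHom_toLinearMap K E L) _ hsum

theorem trace_apply_of_involutive {σ : E →ₐ[K] E} (hσ : Function.Involutive σ) (x : E) :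
    Algebra.trace K E (σ x) = Algebra.trace K E x :=
  Algebra.trace_eq_of_algEquiv (AlgEquiv.ofBijective σ hσ.bijective) x

end Trace

theorem exists_mem_forall_linearMap_apply_ne_zero {K ι M N : Type*} [Field K]
    [Infinite K] [Finite ι] [AddCommGroup M] [Module K M] [AddCommGroup N] [Module K N]
    (p : Submodule K M) (g : ι → M →ₗ[K] N) (hg : ∀ i, ∃ x ∈ p, g i x ≠ 0) :
    ∃ x ∈ p, ∀ i, g i x ≠ 0 := by
  obtain ⟨x, hx⟩ := Submodule.exists_forall_notMem_of_forall_ne_top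
    (fun i ↦ LinearMap.ker ((g i).domRestrict p)) fun i htop ↦ by
      obtain ⟨x, hxp, hx⟩ := hg i
      exact hx (DFunLike.congr_fun (LinearMap.ker_eq_top.1 htop) ⟨x, hxp⟩)
  exact ⟨x, x.2, hx⟩

section Involution

variable {K E : Type*} [Field K] [CommRing E] [Algebra K E]

/-- The `+1`-eigenspace of an algebra endomorphism `σ`; for an involution it is a complement of
`skewPart σ`. -/
def fixedPart (σ : E →ₐ[K] E) : Submodule K E :=
  LinearMap.ker (σ.toLinearMap - LinearMap.id)

/-- The `-1`-eigenspace of an algebra endomorphism `σ`. -/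
def skewPart (σ : E →ₐ[K] E) : Submodule K E :=
  LinearMap.ker (σ.toLinearMap + LinearMap.id)

variable {σ : E →ₐ[K] E}

theorem mem_fixedPart {x : E} : x ∈ fixedPart σ ↔ σ x = x := by
  simp [fixedPart, sub_eq_zero]

theorem mem_skewPart {x : E} : x ∈ skewPart σ ↔ σ x = -x := by
  simp [skewPart, add_eq_zero_iff_eq_neg]

theorem isCompl_fixedPart_skewPart [NeZero (2 : K)] (hσ : Function.Involutive σ) :
    IsCompl (fixedPart σ) (skewPart σ) := by
  have h2 : (2 : K) ≠ 0 := NeZero.ne 2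
  refine ⟨Submodule.disjoint_def.2 fun x hfixed hskew ↦ ?_, codisjoint_iff_le_sup.2 fun x _ ↦ ?_⟩
  · have hxx : (2 : K) • x = 0 := by
      rw [two_smul, ← eq_neg_iff_add_eq_zero, ← mem_skewPart.1 hskew, mem_fixedPart.1 hfixed]
    exact (smul_eq_zero_iff_right h2).1 hxx
  · have hx : (2 : K)⁻¹ • (x + σ x) + (2 : K)⁻¹ • (x - σ x) = x := by
      rw [← smul_add, add_add_sub_cancel, ← two_smul K x, inv_smul_smul₀ h2]
    rw [← hx]
    refine Submodule.add_mem_sup (Submodule.smul_mem _ _ (mem_fixedPart.2 ?_))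
      (Submodule.smul_mem _ _ (mem_skewPart.2 ?_))
    · rw [map_add, hσ x, add_comm]
    · rw [map_sub, hσ x, neg_sub]

theorem mul_mem_fixedPart {x y : E} (hx : x ∈ skewPart σ) (hy : y ∈ skewPart σ) :
    x * y ∈ fixedPart σ :=
  mem_fixedPart.2 (by rw [map_mul, mem_skewPart.1 hx, mem_skewPart.1 hy, neg_mul_neg])

theorem mul_mem_skewPart {x y : E} (hx : x ∈ fixedPart σ) (hy : y ∈ skewPart σ) :
    x * y ∈ skewPart σ :=
  mem_skewPart.2 (by rw [map_mul, mem_fixedPart.1 hx, mem_skewPart.1 hy, mul_neg])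

theorem algHom_ext_of_eqOn_fixedPart_skewPart [NeZero (2 : K)] (hσ : Function.Involutive σ)
    {A : Type*} [Semiring A] [Algebra K A] {φ ψ : E →ₐ[K] A}
    (hfixed : Set.EqOn φ ψ (fixedPart σ)) (hskew : Set.EqOn φ ψ (skewPart σ)) : φ = ψ := by
  refine AlgHom.toLinearMap_injective ((LinearMap.eqLocus_eq_top).1 (top_le_iff.1 ?_))
  rw [← (isCompl_fixedPart_skewPart hσ).sup_eq_top]
  exact sup_le hfixed hskew

section SeparatingHoms

variable {L : Type*} [Field L] [Algebra K L]

theorem eqOn_fixedPart_of_eqOn_skewPart {φ ψ : E →ₐ[K] L} (h : Set.EqOn φ ψ (skewPart σ))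
    {β : E} (hβ : β ∈ skewPart σ) (hφβ : φ β ≠ 0) : Set.EqOn φ ψ (fixedPart σ) := by
  intro x hx
  refine mul_right_cancel₀ hφβ ?_
  calc φ x * φ β = φ (x * β) := (map_mul φ x β).symm
    _ = ψ (x * β) := h (mul_mem_skewPart hx hβ)
    _ = ψ x * φ β := by rw [map_mul, h hβ]

theorem exists_mem_skewPart_forall_algHom_apply_eq_zero [Infinite K] [FiniteDimensional K E]
    (σ : E →ₐ[K] E) :
    ∃ β ∈ skewPart σ, ∀ φ : E →ₐ[K] L, φ β = 0 → ∀ x ∈ skewPart σ, φ x = 0 := by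
  obtain ⟨β, hβ, hφβ⟩ := exists_mem_forall_linearMap_apply_ne_zero (skewPart σ)
    (fun φ : {φ : E →ₐ[K] L // ∃ x ∈ skewPart σ, φ x ≠ 0} ↦ φ.1.toLinearMap) fun φ ↦ φ.2
  refine ⟨β, hβ, fun φ hφ x hx ↦ ?_⟩
  by_contra hφx
  exact hφβ ⟨φ, x, hx, hφx⟩ hφ

theorem eq_zero_of_mul_eq_zero_of_mem_skewPart [Algebra.Etale K E] [IsSepClosed L] {β : E}
    (hβ : ∀ φ : E →ₐ[K] L, φ β = 0 → ∀ x ∈ skewPart σ, φ x = 0) {x : E} (hx : x ∈ skewPart σ)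
    (hβx : β * x = 0) : x = 0 := by
  refine eq_zero_of_forall_algHom_apply_eq_zero fun φ : E →ₐ[K] L ↦ ?_
  have hφ : φ β * φ x = 0 := by rw [← map_mul, hβx, map_zero]
  exact (mul_eq_zero.1 hφ).elim (fun h ↦ hβ φ h x hx) id

variable [FiniteDimensional K E] [Algebra.Etale K E] [IsSepClosed L]

theorem range_mulLeft_sup_span_one_eq_fixedPart
    (hfin : finrank K (fixedPart σ) ≤ finrank K (skewPart σ) + 1) {β : E} (hβ : β ∈ skewPart σ)
    (hβL : ∀ φ : E →ₐ[K] L, φ β = 0 → ∀ x ∈ skewPart σ, φ x = 0) {φ : E →ₐ[K] L}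
    (hφβ : φ β = 0) :
    LinearMap.range ((LinearMap.mulLeft K β).domRestrict (skewPart σ)) ⊔ K ∙ 1 = fixedPart σ := by
  have hinj : Function.Injective ((LinearMap.mulLeft K β).domRestrict (skewPart σ)) :=
    (injective_iff_map_eq_zero _).2 fun x hx ↦
      Subtype.ext (eq_zero_of_mul_eq_zero_of_mem_skewPart hβL x.2 hx)
  have h1 : (1 : E) ∉ LinearMap.range ((LinearMap.mulLeft K β).domRestrict (skewPart σ)) := by
    rintro ⟨x, hx⟩
    have hφ : φ (β * x) = φ 1 := congrArg φ hx
    rw [map_mul, hφβ, zero_mul, map_one] at hφ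
    exact zero_ne_one hφ
  refine Submodule.eq_of_le_of_finrank_le (sup_le ?_ ?_) ?_
  · rintro _ ⟨x, rfl⟩
    exact mul_mem_fixedPart hβ x.2
  · exact (Submodule.span_singleton_le_iff_mem _ _).2 (mem_fixedPart.2 (map_one σ))
  · rwa [Submodule.finrank_sup_span_singleton h1, LinearMap.finrank_range_of_inj hinj]

theorem algHom_ext_of_eqOn_skewPart [NeZero (2 : K)] [Infinite K] (hσ : Function.Involutive σ)
    (hfin : finrank K (fixedPart σ) ≤ finrank K (skewPart σ) + 1) {φ ψ : E →ₐ[K] L}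
    (h : Set.EqOn φ ψ (skewPart σ)) : φ = ψ := by
  refine algHom_ext_of_eqOn_fixedPart_skewPart hσ ?_ h
  obtain ⟨β, hβ, hβL⟩ := exists_mem_skewPart_forall_algHom_apply_eq_zero (L := L) σ
  by_cases hφβ : φ β = 0
  · have hψβ : ψ β = 0 := h hβ ▸ hφβ
    change fixedPart σ ≤ LinearMap.eqLocus φ.toLinearMap ψ.toLinearMap
    rw [← range_mulLeft_sup_span_one_eq_fixedPart hfin hβ hβL hφβ, sup_le_iff,
      Submodule.span_singleton_le_iff_mem]
    refine ⟨?_, by simp [LinearMap.mem_eqLocus]⟩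
    rintro _ ⟨x, rfl⟩
    simp [LinearMap.mem_eqLocus, hφβ, hψβ]
  · exact eqOn_fixedPart_of_eqOn_skewPart h hβ hφβ

theorem exists_mem_skewPart_injective_algHom_apply [NeZero (2 : K)] [Infinite K]
    (hσ : Function.Involutive σ)
    (hfin : finrank K (fixedPart σ) ≤ finrank K (skewPart σ) + 1) :
    ∃ α ∈ skewPart σ, Function.Injective fun φ : E →ₐ[K] L ↦ φ α := by
  obtain ⟨α, hα, hα_ne⟩ := exists_mem_forall_linearMap_apply_ne_zero (skewPart σ)
    (fun p : {p : (E →ₐ[K] L) × (E →ₐ[K] L) // p.1 ≠ p.2} ↦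
      p.1.1.toLinearMap - p.1.2.toLinearMap) fun ⟨⟨φ, ψ⟩, hne⟩ ↦ by
        by_contra! hall
        exact hne (algHom_ext_of_eqOn_skewPart hσ hfin fun x hx ↦ sub_eq_zero.1 (hall x hx))
  refine ⟨α, hα, fun φ ψ hφψ ↦ ?_⟩
  by_contra hne
  exact hα_ne ⟨(φ, ψ), hne⟩ (sub_eq_zero.2 hφψ)

theorem adjoin_singleton_eq_top_of_injective_algHom_apply {α : E}
    (hα : Function.Injective fun φ : E →ₐ[K] L ↦ φ α) : Algebra.adjoin K {α} = ⊤ := by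
  let A := Algebra.adjoin K {α}
  have hcomp : Function.Injective fun φ : E →ₐ[K] L ↦ φ.comp A.val := fun φ ψ h ↦
    hα (DFunLike.congr_fun h ⟨α, Algebra.self_mem_adjoin_singleton K α⟩)
  refine Subalgebra.toSubmodule_injective (Submodule.eq_top_of_finrank_eq
    (A.toSubmodule.finrank_le.antisymm ?_))
  calc finrank K E = Nat.card (E →ₐ[K] L) := (natCard_algHom_eq_finrank K E L).symm
    _ ≤ Nat.card (A →ₐ[K] L) := Nat.card_le_card_of_injective _ hcomp
    _ ≤ finrank K A := card_algHom_le_finrank K A L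

end SeparatingHoms

theorem exists_powerBasis_map_gen_eq_neg [NeZero (2 : K)] [Infinite K] [FiniteDimensional K E]
    [Algebra.Etale K E] (hσ : Function.Involutive σ)
    (hfin : finrank K (fixedPart σ) ≤ finrank K (skewPart σ) + 1) :
    ∃ pb : PowerBasis K E, σ pb.gen = -pb.gen := by
  obtain ⟨α, hα, hinj⟩ :=
    exists_mem_skewPart_injective_algHom_apply (L := SeparableClosure K) hσ hfin
  have htop := adjoin_singleton_eq_top_of_injective_algHom_apply hinj
  exact ⟨.ofAdjoinEqTop (Algebra.IsIntegral.isIntegral α) htop, mem_skewPart.1 hα⟩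

end Involution

section TopCoeff

variable {K E : Type*} [Field K] [CommRing E] [Algebra K E] (pb : PowerBasis K E)

/-- The coordinate functional of the highest basis power `pb.gen ^ (pb.dim - 1)`. It is `0` if
`pb.dim = 0`. -/
noncomputable def topCoeff : E →ₗ[K] K :=
  pb.basis.constr K fun i ↦ if (i : ℕ) + 1 = pb.dim then 1 else 0

theorem topCoeff_gen_pow {n : ℕ} (hn : n < pb.dim) :
    topCoeff pb (pb.gen ^ n) = if n + 1 = pb.dim then 1 else 0 := by
  rw [topCoeff, ← pb.basis_eq_pow ⟨n, hn⟩, Basis.constr_basis]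

theorem topCoeff_aeval_gen {p : K[X]} (hp : p.natDegree < pb.dim) :
    topCoeff pb (aeval pb.gen p) = p.coeff (pb.dim - 1) := by
  have hterm : ∀ i ∈ Finset.range pb.dim,
      topCoeff pb (p.coeff i • pb.gen ^ i) = if i = pb.dim - 1 then p.coeff i else 0 := by
    intro i hi
    have hi : i < pb.dim := Finset.mem_range.1 hi
    have hiff : i + 1 = pb.dim ↔ i = pb.dim - 1 := by lia
    simp [topCoeff_gen_pow pb hi, hiff]
  rw [aeval_eq_sum_range' hp, map_sum, Finset.sum_congr rfl hterm, Finset.sum_ite_eq',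
    if_pos (Finset.mem_range.2 (by lia))]

theorem eq_zero_of_forall_topCoeff_mul_eq_zero {x : E} (hx : ∀ y, topCoeff pb (x * y) = 0) :
    x = 0 := by
  nontriviality E
  obtain ⟨p, hp, rfl⟩ := pb.exists_eq_aeval x
  by_contra hne
  have hp0 : p ≠ 0 := fun h ↦ hne (by rw [h, map_zero])
  obtain ⟨k, hk⟩ := Nat.exists_eq_add_of_lt hp
  have hdeg : (p * X ^ k).natDegree < pb.dim := by
    rw [natDegree_mul_X_pow _ hp0]
    lia
  have hlead : p.coeff p.natDegree = 0 := by
    rw [← coeff_mul_X_pow p k, ← hx (aeval pb.gen (X ^ k : K[X])), ← map_mul,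
      topCoeff_aeval_gen pb hdeg, hk, Nat.add_sub_cancel]
  exact hp0 (leadingCoeff_eq_zero.1 hlead)

variable {pb} {σ : E →ₐ[K] E}

theorem map_pow_of_map_eq_neg {x : E} (hx : σ x = -x) (n : ℕ) :
    σ (x ^ n) = (-1 : K) ^ n • x ^ n := by
  rw [map_pow, hx, ← neg_one_smul K, _root_.smul_pow]

theorem topCoeff_map_of_odd_dim (hgen : σ pb.gen = -pb.gen) (hdim : Odd pb.dim) (x : E) :
    topCoeff pb (σ x) = topCoeff pb x := by
  suffices topCoeff pb ∘ₗ σ.toLinearMap = topCoeff pb from DFunLike.congr_fun this x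
  refine pb.basis.ext fun i ↦ ?_
  simp only [pb.basis_eq_pow, LinearMap.comp_apply, AlgHom.toLinearMap_apply,
    map_pow_of_map_eq_neg hgen, map_smul, topCoeff_gen_pow pb i.2, smul_eq_mul]
  split_ifs with htop
  · have heven : Even (i : ℕ) := by grind
    rw [heven.neg_one_pow, one_mul]
  · rw [mul_zero]

theorem isTotallyIsotropic_span_gen_pow (hgen : σ pb.gen = -pb.gen) {k : ℕ}
    (hk : 2 * k < pb.dim) :
    IsTotallyIsotropic (involutionForm σ (topCoeff pb))
      (Submodule.span K (Set.range fun i : Fin k ↦ pb.gen ^ (i : ℕ))) := by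
  apply isTotallyIsotropic_span
  rintro _ ⟨i, rfl⟩ _ ⟨j, rfl⟩
  rw [involutionForm_apply, map_pow_of_map_eq_neg hgen, mul_smul_comm, ← pow_add, map_smul,
    topCoeff_gen_pow pb (by lia), if_neg (by lia), smul_zero]

theorem finrank_span_gen_pow {k : ℕ} (hk : k ≤ pb.dim) :
    finrank K (Submodule.span K (Set.range fun i : Fin k ↦ pb.gen ^ (i : ℕ))) = k := by
  have hli : LinearIndependent K fun i : Fin k ↦ pb.gen ^ (i : ℕ) := by
    simpa [Function.comp_def] using pb.basis.linearIndependent.comp _ (Fin.castLE_injective hk)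
  rw [finrank_span_eq_card hli, Fintype.card_fin]

end TopCoeff

section IsotropicInvolutionForm

variable {K E : Type*} [Field K] [CommRing E] [Algebra K E] [FiniteDimensional K E]
  [Algebra.Etale K E] {σ : E →ₐ[K] E} {k : ℕ}

theorem exists_isTotallyIsotropic_involutionForm_of_finite [Finite K]
    (hσ : Function.Involutive σ) (hk : 2 * k < finrank K E) :
    ∃ s : E →ₗ[K] K, (involutionForm σ s).IsSymm ∧ (involutionForm σ s).Nondegenerate ∧
      ∃ W, IsTotallyIsotropic (involutionForm σ s) W ∧ finrank K W = k := by
  have hsymm := involutionForm_isSymm hσ (trace_apply_of_involutive hσ)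
  have hnd := involutionForm_nondegenerate (s := Algebra.trace K E) hσ fun _ ↦
    eq_zero_of_forall_trace_mul_eq_zero
  exact ⟨_, hsymm, hnd, exists_isTotallyIsotropic_finrank_eq hsymm hnd hk⟩

theorem exists_isTotallyIsotropic_involutionForm_of_infinite [NeZero (2 : K)] [Infinite K]
    (hσ : Function.Involutive σ) (hk : finrank K E = 2 * k + 1)
    (hfix : finrank K (fixedPart σ) = k + 1) :
    ∃ s : E →ₗ[K] K, (involutionForm σ s).IsSymm ∧ (involutionForm σ s).Nondegenerate ∧
      ∃ W, IsTotallyIsotropic (involutionForm σ s) W ∧ finrank K W = k := by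
  have hsum := Submodule.finrank_add_eq_of_isCompl (isCompl_fixedPart_skewPart (K := K) hσ)
  obtain ⟨pb, hgen⟩ := exists_powerBasis_map_gen_eq_neg hσ (by lia)
  have hdim : pb.dim = 2 * k + 1 := pb.finrank.symm.trans hk
  exact ⟨topCoeff pb, involutionForm_isSymm hσ (topCoeff_map_of_odd_dim hgen ⟨k, hdim⟩),
    involutionForm_nondegenerate hσ fun _ ↦ eq_zero_of_forall_topCoeff_mul_eq_zero pb,
    _, isTotallyIsotropic_span_gen_pow hgen (by lia), finrank_span_gen_pow (by lia)⟩

end IsotropicInvolutionForm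

/-- Let `K` be a field of characteristic `≠ 2`, `ℓ ≥ 1`, `E` a finite étale
commutative `K`-algebra of dimension `2ℓ + 1` with involution `σ` such that
`dim_K E^σ = ℓ + 1`.  Let `V` be a `(2ℓ+1)`-dimensional `K`-vector space with a nondegenerate
symmetric bilinear form `f` of Witt index `ℓ`.  Then there is an injective `K`-algebra
homomorphism `ι : E → End_K V` with `f (ι a x) y = f x (ι (σ a) y)`. -/
theorem statement7 {K E V : Type u} [Field K] [CommRing E] [Algebra K E]
    [FiniteDimensional K E] [Algebra.Etale K E]
    [AddCommGroup V] [Module K V] [FiniteDimensional K V]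
    (hchar : ringChar K ≠ 2)
    (ℓ : ℕ) (hℓ : 1 ≤ ℓ)
    (hdimE : Module.finrank K E = 2 * ℓ + 1)
    (σ : E →ₐ[K] E) (hσ : ∀ x, σ (σ x) = x)
    (hfix : Module.finrank K (LinearMap.ker (σ.toLinearMap - LinearMap.id)) = ℓ + 1)
    (hdimV : Module.finrank K V = 2 * ℓ + 1)
    (f : V →ₗ[K] V →ₗ[K] K)
    (hsym : ∀ x y : V, f x y = f y x)
    (hnd : ∀ x : V, (∀ y : V, f x y = 0) → x = 0)
    (hW : ∃ W : Submodule K V, Module.finrank K W = ℓ ∧ ∀ w ∈ W, ∀ w' ∈ W, f w w' = 0) :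
    ∃ ι : E →ₐ[K] Module.End K V, Function.Injective ι ∧
      ∀ (a : E) (x y : V), f (ι a x) y = f x (ι (σ a) y) := by
  have : NeZero (2 : K) := ⟨Ring.two_ne_zero hchar⟩
  obtain ⟨W, hWdim, hW⟩ := hW
  obtain ⟨s, hs_symm, hs_nd, U, hU, hUdim⟩ : ∃ s : E →ₗ[K] K, (involutionForm σ s).IsSymm ∧
      (involutionForm σ s).Nondegenerate ∧
      ∃ U, IsTotallyIsotropic (involutionForm σ s) U ∧ finrank K U = ℓ := by
    cases finite_or_infinite K
    · exact exists_isTotallyIsotropic_involutionForm_of_finite hσ (by lia)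
    · exact exists_isTotallyIsotropic_involutionForm_of_infinite hσ hdimE hfix
  have hf_nd : f.Nondegenerate := ⟨hnd, fun y hy ↦ hnd y fun x ↦ (hsym y x).trans (hy x)⟩
  obtain ⟨c, -, e, he⟩ := hU.exists_similitude hs_symm hs_nd (by rw [hdimE, hUdim])
    hW ⟨hsym⟩ hf_nd (by rw [hdimV, hWdim]) (hUdim.trans hWdim.symm)
  exact exists_injective_algHom_of_similitude hσ e he
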